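/- Watson's classical summation theorem for a terminating hypergeometric 3F2-series of odd order: for every natural number n and all complex numbers a and c such that (a+1)/2 + k ≠ 0 and 2c + k ≠ 0 for all integers k with 0 ≤ k ≤ 2n, one has ∑_{k=0}^{2n+1} [(-2n-1)_k (a+2n+1)_k (c)_k] / [((a+1)/2)_k (2c)_k k!] = 0, where (x)_k = x(x+1)⋯(x+k-1) denotes the rising factorial (Pochhammer symbol). -/

import Mathlib

open Finset

/-- The Pochhammer symbol (rising factorial) `(x)_k = x(x+1)⋯(x+k-1)` for a complex
number `x`, with `(x)_0 = 1`. -/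
noncomputable def poch (x : ℂ) (k : ℕ) : ℂ := (ascPochhammer ℂ k).eval x

theorem poch_zero (x : ℂ) : poch x 0 = 1 := by simp [poch]

theorem poch_succ (x : ℂ) (k : ℕ) : poch x (k + 1) = poch x k * (x + k) := by
  simp [poch, ascPochhammer_succ_eval]

theorem poch_add (x : ℂ) (m k : ℕ) : poch x (m + k) = poch x m * poch (x + m) k := by
  induction k with
  | zero => simp [poch_zero]
  | succ k ih =>
    rw [← add_assoc, poch_succ, ih, poch_succ]
    push_cast
    ring

theorem poch_succ_left (x : ℂ) (k : ℕ) : poch x (k + 1) = x * poch (x + 1) k := by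
  rw [add_comm, poch_add, poch_succ, poch_zero]
  simp

theorem poch_ne_zero (x : ℂ) (k : ℕ) (h : ∀ i : ℕ, i < k → x + i ≠ 0) : poch x k ≠ 0 := by
  induction k with
  | zero => simp [poch_zero]
  | succ k ih =>
    rw [poch_succ]
    exact mul_ne_zero (ih fun i hi => h i (by omega)) (h k (by omega))

/-- Reflection of the rising factorial. -/
theorem poch_reflect (b : ℂ) (M : ℕ) : poch (1 - b - M) M = (-1) ^ M * poch b M := by
  induction M with
  | zero => simp [poch_zero]
  | succ M ih =>
    rw [poch_succ_left, poch_succ b]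
    have e : (1 - b - ((M + 1 : ℕ) : ℂ) + 1) = 1 - b - M := by push_cast; ring
    rw [e, ih]
    push_cast
    ring

/-- Polynomial form of Chu–Vandermonde. -/
theorem vandermonde_poly (x : ℂ) (k : ℕ) : ∀ y : ℂ,
    ∑ j ∈ range (k + 1), (-1) ^ j * (k.choose j : ℂ) * poch x j * poch (y + j) (k - j)
      = poch (y - x) k := by
  induction k with
  | zero => intro y; simp [poch_zero]
  | succ k ih =>
    intro y
    rw [poch_succ_left, show y - x + 1 = (y + 1) - x by ring, ← ih (y + 1), mul_sum,
      sum_range_succ']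
    have h1 : ∀ j ∈ range (k + 1),
        (-1 : ℂ) ^ (j + 1) * ((k + 1).choose (j + 1) : ℂ) * poch x (j + 1)
          * poch (y + (j + 1 : ℕ)) (k + 1 - (j + 1))
        = (-1 : ℂ) ^ (j + 1) * (k.choose j : ℂ) * poch x (j + 1)
            * poch (y + 1 + j) (k - j)
          + (-1 : ℂ) ^ (j + 1) * (k.choose (j + 1) : ℂ) * poch x (j + 1)
            * poch (y + (j + 1 : ℕ)) (k + 1 - (j + 1)) := by
      intro j _
      rw [Nat.choose_succ_succ, Nat.add_sub_add_right,
        show y + ((j + 1 : ℕ) : ℂ) = y + 1 + j by push_cast; ring]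
      push_cast
      ring
    rw [sum_congr rfl h1, sum_add_distrib, add_assoc]
    have h2 := sum_range_succ' (fun j : ℕ => (-1 : ℂ) ^ j * (k.choose j : ℂ) * poch x j
      * poch (y + j) (k + 1 - j)) (k + 1)
    have h3 := sum_range_succ (fun j : ℕ => (-1 : ℂ) ^ j * (k.choose j : ℂ) * poch x j
      * poch (y + j) (k + 1 - j)) (k + 1)
    simp only [Nat.choose_succ_self, Nat.cast_zero, mul_zero, zero_mul, add_zero,
      Nat.choose_zero_right] at h2 h3 ⊢
    rw [← h2, h3, ← sum_add_distrib]
    refine sum_congr rfl fun j hj => ?_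
    have hj' : j ≤ k := by simpa [Nat.lt_succ_iff] using hj
    rw [Nat.succ_sub hj', poch_succ_left (y + j), poch_succ x,
      show y + (j : ℂ) + 1 = y + 1 + j by ring]
    ring

theorem vandermonde (x y : ℂ) (k : ℕ) (hy : poch y k ≠ 0) :
    ∑ j ∈ range (k + 1), (-1) ^ j * (k.choose j : ℂ) * (poch x j / poch y j)
      = poch (y - x) k / poch y k := by
  rw [← vandermonde_poly, sum_div]
  refine sum_congr rfl fun j hj => ?_
  have hj' : j ≤ k := by simpa [Nat.lt_succ_iff] using hj
  have e : poch y k = poch y j * poch (y + j) (k - j) := by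
    rw [← poch_add, Nat.add_sub_cancel' hj']
  rw [e] at hy ⊢
  have := left_ne_zero_of_mul hy
  have := right_ne_zero_of_mul hy
  field_simp

theorem poch_neg (N k : ℕ) (hk : k ≤ N) :
    poch (-(N : ℂ)) k = (-1) ^ k * (N.choose k : ℂ) * (k.factorial : ℂ) := by
  induction k with
  | zero => simp [poch_zero]
  | succ k ih =>
    rw [poch_succ, ih (by omega)]
    have h := Nat.choose_succ_right_eq N k
    have h' : (N.choose (k + 1) : ℂ) * (k + 1) = N.choose k * (N - k) := by
      rw [← Nat.cast_sub (by omega : k ≤ N)]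
      exact_mod_cast h
    rw [Nat.factorial_succ]
    push_cast
    linear_combination (-1 : ℂ) ^ k * (k.factorial : ℂ) * h'

/-- Parity of the (Gegenbauer-type) polynomial under `x ↦ 1 - x`, coefficientwise. -/
theorem parity_coeff (A b : ℂ) (j M : ℕ) (hA : b - A = 1 - b - (j + M : ℕ))
    (hb : poch b (j + M) ≠ 0) :
    ∑ k ∈ range (j + M + 1), (k.choose j : ℂ) *
      ((-1) ^ k * ((j + M).choose k : ℂ) * (poch A k / poch b k))
      = (-1) ^ (j + M) * (((j + M).choose j : ℂ) * (poch A j / poch b j)) := by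
  rw [add_assoc, sum_range_add, sum_eq_zero, zero_add]
  · rw [poch_add] at hb
    have hb1 := left_ne_zero_of_mul hb
    have hb2 := right_ne_zero_of_mul hb
    have h := vandermonde (A + j) (b + j) M hb2
    rw [show b + (j : ℂ) - (A + j) = 1 - (b + j) - M by
      rw [add_sub_add_right_eq_sub, hA]; push_cast; ring, poch_reflect,
      mul_div_cancel_right₀ _ hb2] at h
    rw [pow_add, show (-1 : ℂ) ^ j * (-1) ^ M * (((j + M).choose j : ℂ) * (poch A j / poch b j))
      = ((-1 : ℂ) ^ j * (((j + M).choose j : ℂ) * (poch A j / poch b j))) * (-1) ^ M by ring,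
      ← h, mul_sum]
    refine sum_congr rfl fun i hi => ?_
    have hi' : i ≤ M := by simpa [Nat.lt_succ_iff] using hi
    have hc := Nat.choose_mul (n := j + M) (k := j + i) (s := j) (by omega)
    rw [Nat.add_sub_cancel_left, Nat.add_sub_cancel_left] at hc
    have hc' : ((j + M).choose (j + i) : ℂ) * ((j + i).choose j : ℂ)
      = ((j + M).choose j : ℂ) * (M.choose i : ℂ) := by exact_mod_cast hc
    rw [poch_add A, poch_add b, mul_div_mul_comm, pow_add]
    linear_combination ((-1 : ℂ) ^ j * (-1) ^ i * (poch A j / poch b j)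
      * (poch (A + j) i / poch (b + j) i)) * hc'
  · intro k hk
    rw [Nat.choose_eq_zero_of_lt (by simpa using hk)]
    simp

/-- **Watson's classical summation theorem** for a terminating hypergeometric
`₃F₂`-series of odd order: the sum vanishes. -/
theorem watson_odd (n : ℕ) (a c : ℂ)
    (h₁ : ∀ k : ℕ, k ≤ 2 * n → (a + 1) / 2 + k ≠ 0)
    (h₂ : ∀ k : ℕ, k ≤ 2 * n → 2 * c + k ≠ 0) :
    ∑ k ∈ Finset.range (2 * n + 2),
      (poch (-(2 * n : ℂ) - 1) k * poch (a + 2 * n + 1) k * poch c k) /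
        (poch ((a + 1) / 2) k * poch (2 * c) k * (Nat.factorial k : ℂ)) = 0 := by
  obtain ⟨N, hN⟩ : ∃ N, N = 2 * n + 1 := ⟨_, rfl⟩
  obtain ⟨A, hA⟩ : ∃ A, A = a + 2 * n + 1 := ⟨_, rfl⟩
  obtain ⟨b, hb⟩ : ∃ b, b = (a + 1) / 2 := ⟨_, rfl⟩
  have hNc : -(2 * n : ℂ) - 1 = -(N : ℂ) := by rw [hN]; push_cast; ring
  rw [hNc, ← hA, ← hb, show 2 * n + 2 = N + 1 by omega]
  have hbN : poch b N ≠ 0 := poch_ne_zero _ _ fun i hi => by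
    rw [hb]; exact h₁ i (by omega)
  have hcN : ∀ k ≤ N, poch (2 * c) k ≠ 0 := fun k hk =>
    poch_ne_zero _ _ fun i hi => h₂ i (by omega)
  have hrel : b - A = 1 - b - (N : ℂ) := by rw [hb, hA, hN]; push_cast; ring
  have hsgn : (-1 : ℂ) ^ N = -1 := Odd.neg_one_pow ⟨n, hN⟩
  -- rewrite the summand
  have e1 : ∑ k ∈ range (N + 1), (poch (-(N : ℂ)) k * poch A k * poch c k) /
        (poch b k * poch (2 * c) k * (Nat.factorial k : ℂ))
      = ∑ k ∈ range (N + 1), ((-1) ^ k * (N.choose k : ℂ) * (poch A k / poch b k))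
          * (poch c k / poch (2 * c) k) := by
    refine sum_congr rfl fun k hk => ?_
    have hk' : k ≤ N := by simpa [Nat.lt_succ_iff] using hk
    have hf : (k.factorial : ℂ) ≠ 0 := by exact_mod_cast k.factorial_ne_zero
    rw [poch_neg N k hk', show (-1 : ℂ) ^ k * (N.choose k : ℂ) * (k.factorial : ℂ) * poch A k
      * poch c k = ((-1 : ℂ) ^ k * (N.choose k : ℂ) * poch A k * poch c k) * (k.factorial : ℂ)
      by ring, mul_div_mul_right _ _ hf]
    rw [mul_div_mul_comm, mul_div_assoc]
  rw [e1]
  -- the moment functional is invariant under reflection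
  have e2 : ∀ k ∈ range (N + 1), poch c k / poch (2 * c) k
      = ∑ j ∈ range (N + 1), (-1) ^ j * (k.choose j : ℂ) * (poch c j / poch (2 * c) j) := by
    intro k hk
    have hk' : k ≤ N := by simpa [Nat.lt_succ_iff] using hk
    have h := vandermonde c (2 * c) k (hcN k hk')
    rw [show 2 * c - c = c by ring] at h
    rw [← h]
    refine sum_subset (range_mono (by omega)) fun j _ hj => ?_
    rw [Nat.choose_eq_zero_of_lt (by simpa using hj)]
    simp
  have key : ∑ k ∈ range (N + 1), ((-1) ^ k * (N.choose k : ℂ) * (poch A k / poch b k))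
          * (poch c k / poch (2 * c) k)
      = -∑ k ∈ range (N + 1), ((-1) ^ k * (N.choose k : ℂ) * (poch A k / poch b k))
          * (poch c k / poch (2 * c) k) := by
    calc _ = ∑ k ∈ range (N + 1), ∑ j ∈ range (N + 1),
            ((-1) ^ k * (N.choose k : ℂ) * (poch A k / poch b k)) *
            ((-1) ^ j * (k.choose j : ℂ) * (poch c j / poch (2 * c) j)) := by
          refine sum_congr rfl fun k hk => ?_
          rw [← mul_sum, ← e2 k hk]
      _ = ∑ j ∈ range (N + 1), ∑ k ∈ range (N + 1),
            ((-1) ^ k * (N.choose k : ℂ) * (poch A k / poch b k)) *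
            ((-1) ^ j * (k.choose j : ℂ) * (poch c j / poch (2 * c) j)) := sum_comm
      _ = _ := by
          rw [← sum_neg_distrib]
          refine sum_congr rfl fun j hj => ?_
          have hj' : j ≤ N := by simpa [Nat.lt_succ_iff] using hj
          obtain ⟨M, rfl⟩ := Nat.exists_eq_add_of_le hj'
          have h := parity_coeff A b j M hrel hbN
          rw [hsgn] at h
          have h4 : ∑ k ∈ range (j + M + 1),
            ((-1) ^ k * ((j + M).choose k : ℂ) * (poch A k / poch b k)) *
            ((-1) ^ j * (k.choose j : ℂ) * (poch c j / poch (2 * c) j))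
            = ((-1) ^ j * (poch c j / poch (2 * c) j)) *
              ∑ k ∈ range (j + M + 1), (k.choose j : ℂ) *
                ((-1) ^ k * ((j + M).choose k : ℂ) * (poch A k / poch b k)) := by
            rw [mul_sum]
            exact sum_congr rfl fun k _ => by ring
          rw [h4, h]
          ring
  exact self_eq_neg.mp key
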